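/- For every integer k ≥ 1, there exists a group homomorphism θ : GL_3(Z_2) → GL_3(Z_{2^k}) such that the composition of θ with the group homomorphism GL_3(Z_{2^k}) → GL_3(Z_2) induced by reduction modulo 2 is the identity on GL_3(Z_2). -/

import Mathlib

/-!
The `3`-dimensional complex representation of the simple group `GL₃(𝔽₂)` of order `168` (Klein's
representation) is defined over `ℤ[α]`, where `α² + α + 2 = 0`, that is `α = (-1 + √-7) / 2`.
In a suitable basis its reduction modulo the prime `(α)`, whose residue field is `𝔽₂`, is the
natural representation. Since `2` splits in `ℤ[α]`, the polynomial `X² + X + 2` has an even root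
modulo every `2 ^ k` (`exists_even_root`), so `ℤ[α]` maps to `ℤ/2^k` with `α` going to that even
root. Composing the representation with this map gives the section.

The representation is given on elementary transvections (`transv`): the transvection
`1 + e_i e_jᵀ` lifts to the negative of a complex reflection. With `α = 0` over `𝔽₂` the same
matrices are the transvections themselves. A version of row reduction (`lift`) writes every
invertible matrix over `𝔽₂` as a product of transvections and a cyclic permutation matrix `cyc`,
and the same product of lifted matrices is the value of the representation. The group is generated
by `cyc` and one transvection (`gen_induction`). That `lift (g * t) = lift g * lift t` for each of
the `168` matrices `g` and each of the two generators `t` is a finite computation in `ℤ[α]`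
(`lift_mul_gen`); it implies multiplicativity (`lift_mul`), and then that the representation
reduces to the identity need only be seen on the two generators (`map_lift`).
-/

namespace GL3Section

open Matrix

/-- The ring `ℤ[α]` with `α² = -2 - α`, the ring of integers of `ℚ(√-7)`. -/
abbrev Za : Type := QuadraticAlgebra ℤ (-2) (-1)

/-- The generator `α` of `Za`. -/
abbrev al : Za := ⟨0, 1⟩

section Lift

variable {R : Type*} [CommRing R] (α : R)

/-- The lift of the elementary transvection `1 + e_i e_jᵀ` over `𝔽₂`, for `i ≠ j`, expressed in
terms of a root `α` of `X² + X + 2`. Here `-1 - α` is the conjugate of `α`. The diagonal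
values are irrelevant and set to `1`. -/
def transv : Fin 3 → Fin 3 → Matrix (Fin 3) (Fin 3) R
  | 0, 1 => !![1, -1 - α, α; 0, -1, 0; 0, 0, -1]
  | 0, 2 => !![-1, 0, -1 - α; 0, -1, α; 0, 0, 1]
  | 1, 0 => !![1, 0, 0; -1 - α, -1, 0; α, 0, -1]
  | 1, 2 => !![-1, 0, 0; α, 1, -1 - α; 0, 0, -1]
  | 2, 0 => !![-1, 0, 0; 0, -1, 0; -1 - α, α, 1]
  | 2, 1 => !![-1, α, 0; 0, 1, 0; 0, -1 - α, -1]
  | _, _ => 1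

/-- The permutation matrix of the cycle `e₀ ↦ e₁ ↦ e₂ ↦ e₀`; it is its own lift. -/
def cyc : Matrix (Fin 3) (Fin 3) R := !![0, 0, 1; 1, 0, 0; 0, 1, 0]

/-- The inverse of `cyc`. -/
def cycInv : Matrix (Fin 3) (Fin 3) R := !![0, 1, 0; 0, 0, 1; 1, 0, 0]

/-- The lift of a matrix over `𝔽₂` that maps `e₀` to the nonzero vector `v`. -/
def toVec (v : Fin 3 → ZMod 2) : Matrix (Fin 3) (Fin 3) R :=
  if v 0 = 1 then
    (if v 1 = 1 then transv α 1 0 else 1) * (if v 2 = 1 then transv α 2 0 else 1)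
  else if v 1 = 1 then (if v 2 = 1 then cyc * transv α 1 0 else cyc)
  else cycInv

/-- The inverse of `toVec α v`. -/
def toVecInv (v : Fin 3 → ZMod 2) : Matrix (Fin 3) (Fin 3) R :=
  if v 0 = 1 then
    (if v 2 = 1 then transv α 2 0 else 1) * (if v 1 = 1 then transv α 1 0 else 1)
  else if v 1 = 1 then (if v 2 = 1 then transv α 1 0 * cycInv else cycInv)
  else cyc

/-- The lift of the block matrix `diag(1, A)` with `A = !![a, b; c, d]` in `GL₂(𝔽₂)`. -/
def block (a b c d : ZMod 2) : Matrix (Fin 3) (Fin 3) R :=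
  if a = 1 then
    if d = 1 then (if b = 1 then transv α 1 2 else if c = 1 then transv α 2 1 else 1)
    else transv α 2 1 * transv α 1 2
  else if d = 1 then transv α 1 2 * transv α 2 1
  else transv α 1 2 * transv α 2 1 * transv α 1 2

/-- The lift of `!![1, x, y; 0, 1, 0; 0, 0, 1]`. -/
def unip (x y : ZMod 2) : Matrix (Fin 3) (Fin 3) R :=
  (if x = 1 then transv α 0 1 else 1) * (if y = 1 then transv α 0 2 else 1)

/-- The lift of the product of `toVec 0 v` and the matrix `h` over `𝔽₂`, where `h` fixes `e₀`. -/
def liftAux (v : Fin 3 → ZMod 2) (h : Matrix (Fin 3) (Fin 3) (ZMod 2)) :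
    Matrix (Fin 3) (Fin 3) R :=
  toVec α v * (block α (h 1 1) (h 1 2) (h 2 1) (h 2 2) * unip α (h 0 1) (h 0 2))

/-- The value of the representation at an invertible matrix `g` over `𝔽₂`, via the factorization
`g = toVec 0 (g e₀) * h` in which `h` fixes `e₀`. Junk if `g` is singular. -/
def lift (g : Matrix (Fin 3) (Fin 3) (ZMod 2)) : Matrix (Fin 3) (Fin 3) R :=
  liftAux α (fun i => g i 0) (toVecInv 0 (fun i => g i 0) * g)

end Lift

set_option maxRecDepth 100000 in
/-- The finite computation, with `g` and its determinant written out in coordinates. -/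
theorem lift_mul_gen_aux : ∀ a b c d e k l m n : ZMod 2,
    a * e * n - a * k * m - b * d * n + b * k * l + c * d * m - c * e * l ≠ 0 →
    lift al (!![a, b, c; d, e, k; l, m, n] * cyc) =
      lift al !![a, b, c; d, e, k; l, m, n] * cyc ∧
    lift al (!![a, b, c; d, e, k; l, m, n] * transv 0 0 1) =
      lift al !![a, b, c; d, e, k; l, m, n] * transv al 0 1 := by
  decide +kernel

theorem lift_mul_gen (g : Matrix (Fin 3) (Fin 3) (ZMod 2)) (hg : g.det ≠ 0) :
    lift al (g * cyc) = lift al g * cyc ∧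
      lift al (g * transv 0 0 1) = lift al g * transv al 0 1 := by
  rw [det_fin_three] at hg
  have h := lift_mul_gen_aux _ _ _ _ _ _ _ _ _ hg
  rwa [← eta_fin_three g] at h

theorem lift_one : lift al 1 = 1 := by decide +kernel

theorem lift_cyc : lift al cyc = cyc := by
  simpa [lift_one] using (lift_mul_gen 1 (by simp)).1

theorem lift_transv : lift al (transv 0 0 1) = transv al 0 1 := by
  simpa [lift_one] using (lift_mul_gen 1 (by simp)).2

theorem transvection_eq : ∀ (i j : Fin 3) (c : ZMod 2), i ≠ j →
    transvection i j c = 1 ∨ transvection i j c = transv 0 i j := by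
  decide +kernel

/-- Induction over `GL₃(𝔽₂)`: it is generated by the cyclic permutation matrix and one
transvection. Conjugation by `cyc` and commutators give all transvections, and an invertible
diagonal matrix over `𝔽₂` is the identity, which is `cyc ^ 3`. -/
theorem gen_induction (p : Matrix (Fin 3) (Fin 3) (ZMod 2) → Prop)
    (hc : p cyc) (ht : p (transv 0 0 1))
    (hmul : ∀ A B, A.det ≠ 0 → B.det ≠ 0 → p A → p B → p (A * B))
    (M : Matrix (Fin 3) (Fin 3) (ZMod 2)) (hM : M.det ≠ 0) : p M := by
  let q : Matrix (Fin 3) (Fin 3) (ZMod 2) → Prop := fun A => A.det ≠ 0 ∧ p A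
  have qmul : ∀ {A B}, q A → q B → q (A * B) := fun hA hB =>
    ⟨by simp [hA.1, hB.1], hmul _ _ hA.1 hB.1 hA.2 hB.2⟩
  have qc : q cyc := ⟨by simp [cyc, det_fin_three], hc⟩
  have q01 : q (transv 0 0 1) := ⟨by simp [transv, det_fin_three], ht⟩
  have q1 : q 1 := by
    rw [(by decide +kernel : (1 : Matrix (Fin 3) (Fin 3) (ZMod 2)) = cyc * (cyc * cyc))]
    exact qmul qc (qmul qc qc)
  have q12 : q (transv 0 1 2) := by
    rw [(by decide +kernel : transv (0 : ZMod 2) 1 2 = cyc * transv 0 0 1 * (cyc * cyc))]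
    exact qmul (qmul qc q01) (qmul qc qc)
  have q20 : q (transv 0 2 0) := by
    rw [(by decide +kernel : transv (0 : ZMod 2) 2 0 = cyc * transv 0 1 2 * (cyc * cyc))]
    exact qmul (qmul qc q12) (qmul qc qc)
  have q02 : q (transv 0 0 2) := by
    rw [(by decide +kernel : transv (0 : ZMod 2) 0 2 =
      transv 0 0 1 * transv 0 1 2 * (transv 0 0 1 * transv 0 1 2))]
    exact qmul (qmul q01 q12) (qmul q01 q12)
  have q10 : q (transv 0 1 0) := by
    rw [(by decide +kernel : transv (0 : ZMod 2) 1 0 = cyc * transv 0 0 2 * (cyc * cyc))]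
    exact qmul (qmul qc q02) (qmul qc qc)
  have q21 : q (transv 0 2 1) := by
    rw [(by decide +kernel : transv (0 : ZMod 2) 2 1 = cyc * transv 0 1 0 * (cyc * cyc))]
    exact qmul (qmul qc q10) (qmul qc qc)
  have qt : ∀ i j, q (transv 0 i j) := by
    intro i j
    fin_cases i <;> fin_cases j
    exacts [q1, q01, q02, q10, q1, q12, q20, q21, q1]
  refine diagonal_transvection_induction_of_det_ne_zero p M hM (fun D hD => ?_) (fun t => ?_) hmul
  · have hD1 : D = 1 := by
      funext i
      have hi : D i ≠ 0 := by
        rw [det_diagonal] at hD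
        exact Finset.prod_ne_zero_iff.mp hD i (Finset.mem_univ i)
      exact (by decide : ∀ x : ZMod 2, x ≠ 0 → x = 1) _ hi
    rw [hD1]
    simpa using q1.2
  · rcases transvection_eq t.i t.j t.c t.hij with h | h
    · rw [TransvectionStruct.toMatrix, h]
      exact q1.2
    · rw [TransvectionStruct.toMatrix, h]
      exact (qt t.i t.j).2

theorem lift_mul (h : Matrix (Fin 3) (Fin 3) (ZMod 2)) (hh : h.det ≠ 0) :
    ∀ g : Matrix (Fin 3) (Fin 3) (ZMod 2), g.det ≠ 0 → lift al (g * h) = lift al g * lift al h := by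
  refine gen_induction
    (fun h => ∀ g : Matrix (Fin 3) (Fin 3) (ZMod 2), g.det ≠ 0 →
      lift al (g * h) = lift al g * lift al h) (fun g hg => ?_) (fun g hg => ?_)
    (fun A B hA _ ihA ihB g hg => ?_) h hh
  · rw [(lift_mul_gen g hg).1, lift_cyc]
  · rw [(lift_mul_gen g hg).2, lift_transv]
  · rw [← mul_assoc, ihB _ (by simp [hg, hA]), ihA g hg, ihB A hA, mul_assoc]

theorem det_units_ne_zero (g : (Matrix (Fin 3) (Fin 3) (ZMod 2))ˣ) : g.val.det ≠ 0 :=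
  ((isUnit_iff_isUnit_det _).mp g.isUnit).ne_zero

/-- The integral form of Klein's representation. -/
def rep : (Matrix (Fin 3) (Fin 3) (ZMod 2))ˣ →* Matrix (Fin 3) (Fin 3) Za where
  toFun g := lift al g.val
  map_one' := lift_one
  map_mul' g h := lift_mul h.val (det_units_ne_zero h) g.val (det_units_ne_zero g)

/-- A ring homomorphism `ℤ[α] → 𝔽₂` killing `α` reduces the representation to the identity. -/
theorem map_lift (φ : Za →+* ZMod 2) (hφ : φ al = 0) (g : Matrix (Fin 3) (Fin 3) (ZMod 2))
    (hg : g.det ≠ 0) : φ.mapMatrix (lift al g) = g := by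
  refine gen_induction (fun g => φ.mapMatrix (lift al g) = g) ?_ ?_
    (fun A B hA hB ihA ihB => ?_) g hg
  · rw [lift_cyc]
    ext p q
    fin_cases p <;> fin_cases q <;> simp [cyc]
  · rw [lift_transv]
    ext p q
    fin_cases p <;> fin_cases q <;> simp [transv, hφ]
  · rw [lift_mul B hB A hA, map_mul, ihA, ihB]

/-- Hensel lifting for `X² + X + 2` at the simple root `0` modulo `2`. -/
theorem exists_even_root (k : ℕ) : ∃ x : ℤ, 2 ∣ x ∧ (2 : ℤ) ^ k ∣ x ^ 2 + x + 2 := by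
  induction k with
  | zero => exact ⟨0, by simp⟩
  | succ k ih =>
    obtain ⟨x, hx, h⟩ := ih
    have h2 : (2 : ℤ) ∣ x ^ 2 := dvd_pow hx two_ne_zero
    -- The map `x ↦ -(x² + 2)`, whose fixed points are the roots, is a `2`-adic contraction on
    -- even integers.
    refine ⟨-(x ^ 2 + 2), by omega, ?_⟩
    have e : (-(x ^ 2 + 2)) ^ 2 + -(x ^ 2 + 2) + 2 = (x ^ 2 + x + 2) * (x ^ 2 + 2 - x) := by ring
    rw [e, pow_succ]
    exact mul_dvd_mul h (by omega)

end GL3Section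

open GL3Section in
/-- For every `k ≥ 1` there is a group homomorphism
`θ : GL₃(ℤ/2) → GL₃(ℤ/2^k)` such that composing `θ` with the reduction-mod-2 map
`GL₃(ℤ/2^k) → GL₃(ℤ/2)` is the identity. -/
theorem exists_section_GL3_Z2pow (k : ℕ) (hk : 1 ≤ k) :
    ∃ θ : (Matrix (Fin 3) (Fin 3) (ZMod 2))ˣ →* (Matrix (Fin 3) (Fin 3) (ZMod (2 ^ k)))ˣ,
      ∀ g, Units.map ((ZMod.castHom (dvd_pow_self 2 (by omega : k ≠ 0))
          (ZMod 2)).mapMatrix (m := Fin 3)).toMonoidHom (θ g) = g := by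
  obtain ⟨x, hx2, hx⟩ := exists_even_root k
  have hroot : (x : ZMod (2 ^ k)) * x =
      (-2 : ℤ) • (1 : ZMod (2 ^ k)) + (-1 : ℤ) • (x : ZMod (2 ^ k)) := by
    have h : ((x ^ 2 + x + 2 : ℤ) : ZMod (2 ^ k)) = 0 := by
      rw [ZMod.intCast_zmod_eq_zero_iff_dvd]
      exact_mod_cast hx
    push_cast at h
    simp only [zsmul_eq_mul]
    push_cast
    linear_combination h
  let ψ : Za →ₐ[ℤ] ZMod (2 ^ k) := QuadraticAlgebra.lift ⟨(x : ZMod (2 ^ k)), hroot⟩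
  have hψ : ψ al = (x : ZMod (2 ^ k)) := by
    simp [ψ, QuadraticAlgebra.lift]
  refine ⟨((ψ.toRingHom.mapMatrix (m := Fin 3)).toMonoidHom.comp rep).toHomUnits, fun g => ?_⟩
  have hred := map_lift
    ((ZMod.castHom (dvd_pow_self 2 (by omega : k ≠ 0)) (ZMod 2)).comp ψ.toRingHom) (by
      have h0 : ((x : ℤ) : ZMod 2) = 0 := (ZMod.intCast_zmod_eq_zero_iff_dvd x 2).mpr hx2
      change ZMod.castHom (dvd_pow_self 2 (by omega : k ≠ 0)) (ZMod 2) (ψ al) = 0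
      rw [hψ, map_intCast, h0]) g.val (det_units_ne_zero g)
  ext i j
  exact congrFun (congrFun hred i) j
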